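/- Let p be an odd prime dividing k, with k ≥ 10, and let F = 𝔽_p. Then the Specht module S^(k-2,1,1) for S_k over F has dimension (k-1)(k-2)/2, is indecomposable with socle isomorphic to the irreducible module D^(k-1,1) (of dimension k-2) and head isomorphic to D^(k-2,1,1) (of dimension (k-2)(k-3)/2). -/

import Mathlib

/-!
We use the following concrete (James) models for `S_k`-modules over `F = 𝔽_p`.
The permutation module `M^(k-2,1,1)` has basis the (k-2,1,1)-tabloids, i.e. ordered pairs
of distinct points; the Specht module `S^(k-2,1,1)` is its submodule of antisymmetric
functions whose row sums vanish. `D^λ = S^λ/(S^λ ∩ (S^λ)^⊥)` where the bilinear form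
makes the tabloid basis orthonormal; for `λ = (k-1,1)` and `p ∣ k` this is the quotient
of the zero-sum submodule of `F^k` by the constants.
-/

open Equiv

/-- Permutation representation of `G` on `X → F` from an action of `G` on `X`. -/
def permRep (F G X : Type*) [CommRing F] [Group G] [MulAction G X] :
    Representation F G (X → F) where
  toFun g := LinearMap.funLeft F F (fun x => g⁻¹ • x)
  map_one' := by ext v x; simp
  map_mul' g h := by ext v x; simp [LinearMap.funLeft, mul_smul]

variable {F G V : Type*} [CommRing F] [Group G] [AddCommGroup V] [Module F V]

/-- A submodule invariant under a representation. -/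
def InvSub (ρ : Representation F G V) (U : Submodule F V) : Prop :=
  ∀ g, ∀ v ∈ U, ρ g v ∈ U

/-- An irreducible (simple) invariant submodule. -/
def IsIrreducibleSub (ρ : Representation F G V) (U : Submodule F V) : Prop :=
  InvSub ρ U ∧ U ≠ ⊥ ∧ ∀ W ≤ U, InvSub ρ W → W = ⊥ ∨ W = U

/-- The socle of the invariant submodule `S`: the sum of all irreducible invariant
submodules contained in `S`. -/
def socIn (ρ : Representation F G V) (S : Submodule F V) : Submodule F V :=
  sSup {U | U ≤ S ∧ IsIrreducibleSub ρ U}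

/-- The radical of the invariant submodule `S`: the intersection of all maximal proper
invariant submodules of `S` (so `S/radIn ρ S` is the head of `S`). -/
def radIn (ρ : Representation F G V) (S : Submodule F V) : Submodule F V :=
  sInf {U | U ≤ S ∧ InvSub ρ U ∧ U ≠ S ∧
    ∀ W, U ≤ W → W ≤ S → InvSub ρ W → W = U ∨ W = S}

/-- `S` is an indecomposable invariant submodule. -/
def IsIndecomposableSub (ρ : Representation F G V) (S : Submodule F V) : Prop :=
  ¬ ∃ U W : Submodule F V, InvSub ρ U ∧ InvSub ρ W ∧ U ≠ ⊥ ∧ W ≠ ⊥ ∧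
      U ⊓ W = ⊥ ∧ U ⊔ W = S

/-- The subrepresentation on an invariant submodule. -/
def subRep (ρ : Representation F G V) (U : Submodule F V)
    (hU : InvSub ρ U) : Representation F G U where
  toFun g := (ρ g).restrict (hU g)
  map_one' := by ext v; simp [LinearMap.restrict_apply]
  map_mul' g h := by ext v; simp [LinearMap.restrict_apply]

/-- The quotient representation on `V ⧸ U` for an invariant submodule `U`. -/
def quotRep (ρ : Representation F G V) (U : Submodule F V)
    (hU : InvSub ρ U) : Representation F G (V ⧸ U) where
  toFun g := U.mapQ U (ρ g) (fun v hv => hU g v hv)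
  map_one' := by
    refine Submodule.linearMap_qext _ ?_
    ext v; simp
  map_mul' g h := by
    refine Submodule.linearMap_qext _ ?_
    ext v; simp [Submodule.mapQ_apply]

/-- Ordered pairs of distinct elements of `Fin k`, i.e. `(k-2,1,1)`-tabloids. -/
def OP (k : ℕ) := {q : Fin k × Fin k // q.1 ≠ q.2}

instance (k : ℕ) : Fintype (OP k) := Subtype.fintype _
instance (k : ℕ) : DecidableEq (OP k) := Subtype.instDecidableEq

instance (k : ℕ) : MulAction (Equiv.Perm (Fin k)) (OP k) where
  smul g q := ⟨(g q.1.1, g q.1.2), fun hgq => q.2 (g.injective hgq)⟩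
  one_smul q := by cases q; rfl
  mul_smul g h q := by cases q; rfl

/-- Transposing an ordered pair. -/
def swapOP {k : ℕ} (q : OP k) : OP k := ⟨(q.1.2, q.1.1), fun h => q.2 h.symm⟩

/-- Antisymmetric functions on ordered pairs. -/
noncomputable def antisymSub (k : ℕ) (F : Type*) [CommRing F] : Submodule F (OP k → F) :=
  ⨅ q : OP k, LinearMap.ker
    ((LinearMap.proj q : (OP k → F) →ₗ[F] F) + LinearMap.proj (swapOP q))

/-- Functions on ordered pairs whose row sums vanish. -/
noncomputable def rowZeroSub (k : ℕ) (F : Type*) [CommRing F] : Submodule F (OP k → F) :=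
  ⨅ i : Fin k, LinearMap.ker
    (∑ q ∈ Finset.univ.filter (fun q : OP k => q.1.1 = i),
      (LinearMap.proj q : (OP k → F) →ₗ[F] F))

/-- The Specht module `S^(k-2,1,1)` inside the tabloid permutation module. -/
noncomputable def spechtHook (k : ℕ) (F : Type*) [CommRing F] : Submodule F (OP k → F) :=
  antisymSub k F ⊓ rowZeroSub k F

lemma antisym_inv (k : ℕ) (F : Type*) [CommRing F] :
    InvSub (permRep F (Equiv.Perm (Fin k)) (OP k)) (antisymSub k F) := by
  intro g v hv
  simp only [antisymSub, Submodule.mem_iInf, LinearMap.mem_ker, LinearMap.add_apply,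
    LinearMap.proj_apply] at hv ⊢
  intro q
  exact hv (g⁻¹ • q)

lemma rowZero_inv (k : ℕ) (F : Type*) [CommRing F] :
    InvSub (permRep F (Equiv.Perm (Fin k)) (OP k)) (rowZeroSub k F) := by
  intro g v hv
  simp only [rowZeroSub, Submodule.mem_iInf, LinearMap.mem_ker, LinearMap.sum_apply,
    LinearMap.proj_apply] at hv ⊢
  intro i
  rw [← hv (g⁻¹ i)]
  refine Finset.sum_nbij' (fun q => g⁻¹ • q) (fun q => g • q) ?_ ?_ ?_ ?_ ?_
  · intro q hq
    simp only [Finset.mem_filter, Finset.mem_univ, true_and] at hq ⊢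
    show g⁻¹ q.1.1 = g⁻¹ i
    rw [hq]
  · intro q hq
    simp only [Finset.mem_filter, Finset.mem_univ, true_and] at hq ⊢
    show g q.1.1 = i
    rw [hq]; simp
  · intro q _; exact smul_inv_smul g q
  · intro q _; exact inv_smul_smul g q
  · intro q _; rfl

lemma spechtHook_inv (k : ℕ) (F : Type*) [CommRing F] :
    InvSub (permRep F (Equiv.Perm (Fin k)) (OP k)) (spechtHook k F) :=
  fun g v hv => ⟨antisym_inv k F g v hv.1, rowZero_inv k F g v hv.2⟩

/-- The linear functional `v ↦ ∑_q w q * v q` (the standard bilinear form against `w`). -/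
noncomputable def formMap {X : Type*} [Fintype X] [DecidableEq X] (F : Type*) [CommRing F]
    (w : X → F) : (X → F) →ₗ[F] F :=
  ∑ q : X, w q • (LinearMap.proj q : (X → F) →ₗ[F] F)

/-- The orthogonal complement of `U` with respect to the standard form. -/
noncomputable def perpSub {X : Type*} [Fintype X] [DecidableEq X] (F : Type*) [CommRing F]
    (U : Submodule F (X → F)) : Submodule F (X → F) :=
  ⨅ w : U, LinearMap.ker (formMap F (w : X → F))

lemma spechtHook_perp_inv (k : ℕ) (F : Type*) [CommRing F] :
    InvSub (permRep F (Equiv.Perm (Fin k)) (OP k))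
      (spechtHook k F ⊓ perpSub F (spechtHook k F)) := by
  intro g v hv
  refine ⟨spechtHook_inv k F g v hv.1, ?_⟩
  have hv2 : ∀ w : (spechtHook k F), ∑ q : OP k, (w : OP k → F) q * v q = 0 := by
    intro w
    have h2 := hv.2
    rw [perpSub] at h2
    have := (Submodule.mem_iInf _).mp h2 w
    simpa only [LinearMap.mem_ker, formMap, LinearMap.sum_apply,
      LinearMap.smul_apply, LinearMap.proj_apply, smul_eq_mul] using this
  rw [perpSub]
  refine (Submodule.mem_iInf _).mpr fun w => ?_
  simp only [LinearMap.mem_ker, formMap, LinearMap.sum_apply,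
    LinearMap.smul_apply, LinearMap.proj_apply, smul_eq_mul]
  have h1 : ∀ q : OP k,
      (w : OP k → F) q * permRep F (Equiv.Perm (Fin k)) (OP k) g v q
        = (w : OP k → F) q * v (g⁻¹ • q) := fun q => rfl
  calc ∑ q : OP k, (w : OP k → F) q * permRep F (Equiv.Perm (Fin k)) (OP k) g v q
      = ∑ q : OP k, (w : OP k → F) (g • q) * v q := by
        simp only [h1]
        exact Fintype.sum_equiv (MulAction.toPerm g).symm _ _ (fun q => by
          simp [MulAction.toPerm])
    _ = 0 := by
        have hw : permRep F (Equiv.Perm (Fin k)) (OP k) g⁻¹ (w : OP k → F) ∈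
            spechtHook k F := spechtHook_inv k F g⁻¹ w w.2
        have := hv2 ⟨_, hw⟩
        rw [← this]
        exact Finset.sum_congr rfl fun q _ => by
          simp [permRep, LinearMap.funLeft, mul_comm]

/-- The sum-of-coordinates functional on `F^k`. -/
noncomputable def sumFunctional (k : ℕ) (F : Type*) [CommRing F] :
    (Fin k → F) →ₗ[F] F := ∑ i : Fin k, LinearMap.proj i

/-- The zero-sum submodule of `F^k`, i.e. the Specht module `S^(k-1,1)`. -/
noncomputable def zeroSum (k : ℕ) (F : Type*) [CommRing F] : Submodule F (Fin k → F) :=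
  LinearMap.ker (sumFunctional k F)

/-- The line of constant functions in `F^k`. -/
def constLine (k : ℕ) (F : Type*) [CommRing F] : Submodule F (Fin k → F) :=
  Submodule.span F {fun _ => (1 : F)}

lemma zeroSum_inv (k : ℕ) (F : Type*) [CommRing F] :
    InvSub (permRep F (Equiv.Perm (Fin k)) (Fin k)) (zeroSum k F) := by
  intro g v hv
  simp only [zeroSum, LinearMap.mem_ker, sumFunctional, LinearMap.sum_apply,
    LinearMap.proj_apply] at hv ⊢
  rw [← hv]
  exact Fintype.sum_equiv g⁻¹ _ _ (fun i => rfl)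

lemma constLine_comap_inv (k : ℕ) (F : Type*) [CommRing F] :
    InvSub (subRep (permRep F (Equiv.Perm (Fin k)) (Fin k)) (zeroSum k F) (zeroSum_inv k F))
      ((constLine k F).comap (zeroSum k F).subtype) := by
  intro g v hv
  simp only [Submodule.mem_comap, Submodule.subtype_apply] at hv ⊢
  rw [constLine, Submodule.mem_span_singleton] at hv ⊢
  obtain ⟨c, hc⟩ := hv
  refine ⟨c, ?_⟩
  show _ = permRep F (Equiv.Perm (Fin k)) (Fin k) g (v : Fin k → F)
  rw [← hc]
  rfl

section Model

variable (k p : ℕ) [Fact p.Prime]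

/-- The irreducible module `D^(k-1,1)` (for `p ∣ k`): zero-sum vectors modulo constants. -/
noncomputable def Dk11 := (zeroSum k (ZMod p)) ⧸
  ((constLine k (ZMod p)).comap (zeroSum k (ZMod p)).subtype)

noncomputable instance : AddCommGroup (Dk11 k p) :=
  inferInstanceAs (AddCommGroup ((zeroSum k (ZMod p)) ⧸
    ((constLine k (ZMod p)).comap (zeroSum k (ZMod p)).subtype)))

noncomputable instance : Module (ZMod p) (Dk11 k p) :=
  inferInstanceAs (Module (ZMod p) ((zeroSum k (ZMod p)) ⧸
    ((constLine k (ZMod p)).comap (zeroSum k (ZMod p)).subtype)))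

/-- The representation of `S_k` on `D^(k-1,1)`. -/
noncomputable def Dk11Rep : Representation (ZMod p) (Equiv.Perm (Fin k)) (Dk11 k p) :=
  quotRep (subRep (permRep (ZMod p) (Equiv.Perm (Fin k)) (Fin k)) (zeroSum k (ZMod p))
      (zeroSum_inv k (ZMod p)))
    ((constLine k (ZMod p)).comap (zeroSum k (ZMod p)).subtype)
    (constLine_comap_inv k (ZMod p))

/-- The irreducible module `D^(k-2,1,1) = S^(k-2,1,1)/(S ∩ S^⊥)`. -/
noncomputable def Dk211 := (spechtHook k (ZMod p)) ⧸
  ((spechtHook k (ZMod p) ⊓ perpSub (ZMod p) (spechtHook k (ZMod p))).comap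
    (spechtHook k (ZMod p)).subtype)

noncomputable instance : AddCommGroup (Dk211 k p) :=
  inferInstanceAs (AddCommGroup ((spechtHook k (ZMod p)) ⧸
    ((spechtHook k (ZMod p) ⊓ perpSub (ZMod p) (spechtHook k (ZMod p))).comap
      (spechtHook k (ZMod p)).subtype)))

noncomputable instance : Module (ZMod p) (Dk211 k p) :=
  inferInstanceAs (Module (ZMod p) ((spechtHook k (ZMod p)) ⧸
    ((spechtHook k (ZMod p) ⊓ perpSub (ZMod p) (spechtHook k (ZMod p))).comap
      (spechtHook k (ZMod p)).subtype)))

lemma spechtHook_perp_comap_inv :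
    InvSub (subRep (permRep (ZMod p) (Equiv.Perm (Fin k)) (OP k)) (spechtHook k (ZMod p))
        (spechtHook_inv k (ZMod p)))
      ((spechtHook k (ZMod p) ⊓ perpSub (ZMod p) (spechtHook k (ZMod p))).comap
        (spechtHook k (ZMod p)).subtype) := by
  intro g v hv
  simp only [Submodule.mem_comap, Submodule.subtype_apply] at hv ⊢
  exact spechtHook_perp_inv k (ZMod p) g (v : OP k → ZMod p) hv

/-- The representation of `S_k` on `D^(k-2,1,1)`. -/
noncomputable def Dk211Rep : Representation (ZMod p) (Equiv.Perm (Fin k)) (Dk211 k p) :=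
  quotRep _ _ (spechtHook_perp_comap_inv k p)

end Model


section Aux

variable {k : ℕ} {K : Type*} [Field K]

/-- Extend a function on ordered pairs by zero on the diagonal. -/
def toMat (v : OP k → K) (i j : Fin k) : K :=
  if h : i ≠ j then v ⟨(i, j), h⟩ else 0

/-- Restrict a matrix to ordered pairs. -/
def ofMat (M : Fin k → Fin k → K) : OP k → K := fun q => M q.1.1 q.1.2

lemma toMat_ofMat (M : Fin k → Fin k → K) (hM : ∀ i, M i i = 0) (i j : Fin k) :
    toMat (ofMat M) i j = M i j := by
  by_cases h : i = j
  · subst h; simp [toMat, hM]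
  · simp [toMat, ofMat, h]

lemma toMat_op (v : OP k → K) (q : OP k) : toMat v q.1.1 q.1.2 = v q := by
  have h := q.2
  simp only [toMat, dif_pos h]
  rfl

lemma toMat_diag (v : OP k → K) (i : Fin k) : toMat v i i = 0 := by simp [toMat]

lemma toMat_ext {v w : OP k → K} (h : ∀ i j, toMat v i j = toMat w i j) : v = w := by
  funext q
  rw [← toMat_op v, ← toMat_op w, h]

lemma toMat_add (v w : OP k → K) (i j : Fin k) :
    toMat (v + w) i j = toMat v i j + toMat w i j := by
  by_cases h : i = j
  · simp [toMat, h]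
  · simp only [toMat, dif_pos (show i ≠ j from h)]
    rfl

lemma toMat_sub (v w : OP k → K) (i j : Fin k) :
    toMat (v - w) i j = toMat v i j - toMat w i j := by
  by_cases h : i = j
  · simp [toMat, h]
  · simp only [toMat, dif_pos (show i ≠ j from h)]
    rfl

lemma toMat_smul (c : K) (w : OP k → K) (i j : Fin k) :
    toMat (c • w) i j = c * toMat w i j := by
  by_cases h : i = j
  · simp [toMat, h]
  · simp only [toMat, dif_pos (show i ≠ j from h)]
    rfl

lemma toMat_sum {ι : Type*} (s : Finset ι) (v : ι → OP k → K) (i j : Fin k) :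
    toMat (∑ x ∈ s, v x) i j = ∑ x ∈ s, toMat (v x) i j := by
  by_cases h : i = j
  · simp [toMat, h]
  · simp only [toMat, dif_pos (show i ≠ j from h)]
    exact Finset.sum_apply _ _ _

lemma toMat_rep (g : Equiv.Perm (Fin k)) (v : OP k → K) (i j : Fin k) :
    toMat (permRep K (Equiv.Perm (Fin k)) (OP k) g v) i j = toMat v (g⁻¹ i) (g⁻¹ j) := by
  by_cases h : i = j
  · simp [toMat, h]
  · have h' : g⁻¹ i ≠ g⁻¹ j := fun e => h (g⁻¹.injective e)
    simp only [toMat, dif_pos h', dif_pos (show i ≠ j from h)]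
    rfl

lemma sum_op (v : OP k → K) : ∑ q, v q = ∑ i, ∑ j, toMat v i j := by
  rw [← Fintype.sum_prod_type']
  refine Fintype.sum_of_injective (fun q : OP k => q.1) (Subtype.val_injective) _ _ ?_ ?_
  · intro z hz
    have : z.1 = z.2 := by
      by_contra hne
      exact hz ⟨⟨z, hne⟩, rfl⟩
    simp [toMat, this]
  · intro q
    exact (toMat_op v q).symm

lemma sum_row (v : OP k → K) (i : Fin k) :
    ∑ q ∈ Finset.univ.filter (fun q : OP k => q.1.1 = i), v q = ∑ j, toMat v i j := by
  rw [Finset.sum_filter, sum_op, Finset.sum_eq_single i]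
  · refine Finset.sum_congr rfl fun j _ => ?_
    by_cases h : i = j <;> simp [toMat, h]
  · intro a _ ha
    refine Finset.sum_eq_zero fun j _ => ?_
    by_cases h : a = j
    · simp [toMat, h]
    · simp [toMat, h, ha]
  · simp

lemma mem_specht (v : OP k → K) : v ∈ spechtHook k K ↔
    (∀ i j, toMat v i j = - toMat v j i) ∧ ∀ i, ∑ j, toMat v i j = 0 := by
  simp only [spechtHook, Submodule.mem_inf, antisymSub, rowZeroSub, Submodule.mem_iInf,
    LinearMap.mem_ker, LinearMap.add_apply, LinearMap.sum_apply, LinearMap.proj_apply, sum_row]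
  refine and_congr_left fun _ => ⟨fun h i j => ?_, fun h q => ?_⟩
  · by_cases hij : i = j
    · simp [toMat, hij]
    · have := h ⟨(i, j), hij⟩
      have hji : j ≠ i := fun e => hij e.symm
      simp only [toMat, dif_pos hji, dif_pos (show i ≠ j from hij)]
      exact eq_neg_of_add_eq_zero_left this
  · have := h q.1.1 q.1.2
    rw [toMat_op] at this
    rw [this]
    have h2 := toMat_op v (swapOP q)
    simp only [swapOP] at h2 ⊢
    rw [h2]; ring

/-- Indicator. -/
def dl (a i : Fin k) : K := if a = i then 1 else 0

/-- Matrix of the polytabloid. -/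
def tm (a b c : Fin k) (i j : Fin k) : K :=
  (dl a i - dl b i) * (dl b j - dl c j) - (dl a j - dl b j) * (dl b i - dl c i)

/-- Polytabloid. -/
def tv (K : Type*) [Field K] (a b c : Fin k) : OP k → K := ofMat (tm a b c)

lemma toMat_tv (a b c i j : Fin k) : toMat (tv K a b c) i j = tm a b c i j :=
  toMat_ofMat _ (fun i => by simp [tm]) i j

lemma sum_dl (a : Fin k) : ∑ i, (dl a i : K) = 1 := by simp [dl]

lemma tv_mem (a b c : Fin k) : tv K a b c ∈ spechtHook k K := by
  rw [mem_specht]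
  simp only [toMat_tv]
  refine ⟨fun i j => by simp only [tm]; ring, fun i => ?_⟩
  simp only [tm, Finset.sum_sub_distrib, ← Finset.mul_sum, ← Finset.sum_mul, sum_dl]
  ring

lemma dl_perm (g : Equiv.Perm (Fin k)) (a i : Fin k) : (dl a (g⁻¹ i) : K) = dl (g a) i := by
  have : a = g⁻¹ i ↔ g a = i := by rw [Equiv.Perm.eq_inv_iff_eq]
  simp only [dl, this]

lemma rep_tv (g : Equiv.Perm (Fin k)) (a b c : Fin k) :
    permRep K (Equiv.Perm (Fin k)) (OP k) g (tv K a b c) = tv K (g a) (g b) (g c) := by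
  refine toMat_ext fun i j => ?_
  simp only [toMat_rep, toMat_tv, tm, dl_perm]

lemma sum_dl_mul (x : Fin k) (f : Fin k → K) : ∑ i, f i * dl i x = f x := by
  simp [dl]

lemma sum_dl_mul_right (x : Fin k) (f : Fin k → K) : ∑ i, f i * dl x i = f x := by
  simp [dl]

lemma specht_expand (h2 : (2 : K) ≠ 0) (o : Fin k) (v : OP k → K) (hv : v ∈ spechtHook k K) :
    v = (2 : K)⁻¹ • ∑ i, ∑ j, toMat v i j • tv K o i j := by
  rw [mem_specht] at hv
  obtain ⟨ha, hr⟩ := hv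
  have hc : ∀ j, ∑ i, toMat v i j = 0 := fun j => by
    have : ∀ i, toMat v i j = - toMat v j i := fun i => ha i j
    simp only [this, Finset.sum_neg_distrib, hr, neg_zero]
  refine toMat_ext fun x y => ?_
  rw [toMat_smul, toMat_sum]
  simp only [toMat_sum, toMat_smul, toMat_tv]
  have key : ∀ i j, toMat v i j * tm o i j x y =
      toMat v i j * (dl o x * dl i y - dl o y * dl i x)
       + (dl o y * (toMat v i j * dl j x) - dl o x * (toMat v i j * dl j y))
       + ((toMat v i j * dl j y) * dl i x - (toMat v i j * dl j x) * dl i y) := by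
    intro i j; simp only [tm]; ring
  simp only [key, Finset.sum_add_distrib, Finset.sum_sub_distrib, ← Finset.mul_sum,
    ← Finset.sum_mul, sum_dl_mul, hr, hc]
  rw [ha y x]
  have : (2 : K)⁻¹ * 2 = 1 := inv_mul_cancel₀ h2
  linear_combination (-toMat v x y) * this

lemma specht_le_of_tv (h2 : (2 : K) ≠ 0) (hk : 0 < k) (U : Submodule K (OP k → K))
    (hU : ∀ a b c, tv K a b c ∈ U) : spechtHook k K ≤ U := by
  intro v hv
  rw [specht_expand h2 ⟨0, hk⟩ v hv]
  exact U.smul_mem _ (U.sum_mem fun i _ => U.sum_mem fun j _ => U.smul_mem _ (hU _ _ _))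

lemma tv_all (U : Submodule K (OP k → K))
    (hU : InvSub (permRep K (Equiv.Perm (Fin k)) (OP k)) U) {a b c : Fin k}
    (hab : a ≠ b) (hbc : b ≠ c) (hac : a ≠ c) (h : tv K a b c ∈ U) (x y z : Fin k) :
    tv K x y z ∈ U := by
  have z0 : ∀ w : OP k → K, (∀ i j, toMat w i j = 0) → w ∈ U := by
    intro w hw
    have : w = 0 := toMat_ext fun i j => by rw [hw]; by_cases h : i = j <;> simp [toMat, h]; rfl
    rw [this]; exact U.zero_mem
  by_cases hxy : x = y
  · subst hxy; exact z0 _ fun i j => by rw [toMat_tv]; simp only [tm]; ring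
  by_cases hyz : y = z
  · subst hyz; exact z0 _ fun i j => by rw [toMat_tv]; simp only [tm]; ring
  by_cases hxz : x = z
  · subst hxz; exact z0 _ fun i j => by rw [toMat_tv]; simp only [tm]; ring
  have s1 := hU (swap a x) _ h
  rw [rep_tv, swap_apply_left] at s1
  have hb1 : swap a x b ≠ x := fun e => hab (by
    have := congrArg (swap a x) e; simpa using this.symm)
  have hc1 : swap a x c ≠ x := fun e => hac (by
    have := congrArg (swap a x) e; simpa using this.symm)
  have hbc1 : swap a x b ≠ swap a x c := fun e => hbc ((swap a x).injective e)
  generalize swap a x b = b1 at *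
  generalize swap a x c = c1 at *
  have s2 := hU (swap b1 y) _ s1
  rw [rep_tv, swap_apply_left, swap_apply_of_ne_of_ne hb1.symm hxy] at s2
  have hc2 : swap b1 y c1 ≠ y := fun e => hbc1 (by
    have := congrArg (swap b1 y) e; simpa using this.symm)
  have hc2' : swap b1 y c1 ≠ x := fun e => hc1 (by
    have := congrArg (swap b1 y) e
    rw [swap_apply_of_ne_of_ne hb1.symm hxy] at this; simpa using this)
  generalize swap b1 y c1 = c2 at *
  have s3 := hU (swap c2 z) _ s2
  rwa [rep_tv, swap_apply_left, swap_apply_of_ne_of_ne hc2'.symm hxz,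
    swap_apply_of_ne_of_ne hc2.symm hyz] at s3

lemma kappa (v : OP k → K) (hv : ∀ i j, toMat v i j = - toMat v j i) {a b c : Fin k}
    (hab : a ≠ b) (hbc : b ≠ c) (hac : a ≠ c) :
    let ρ := permRep K (Equiv.Perm (Fin k)) (OP k)
    v - ρ (swap a b) v - ρ (swap b c) v - ρ (swap a c) v + ρ (swap a b * swap b c) v
      + ρ (swap b c * swap a b) v
      = (2 * (toMat v a b + toMat v b c + toMat v c a)) • tv K a b c := by
  intro ρ
  refine toMat_ext fun x y => ?_
  simp only [ρ, toMat_add, toMat_sub, toMat_smul, toMat_rep, toMat_tv, mul_inv_rev, swap_inv,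
    Perm.mul_apply]
  have hba := hab.symm
  have hcb := hbc.symm
  have hca := hac.symm
  have key : ∀ x, x = a ∨ x = b ∨ x = c ∨
      (x ≠ a ∧ x ≠ b ∧ x ≠ c ∧ a ≠ x ∧ b ≠ x ∧ c ≠ x) := fun x => by
    simp only [ne_comm (b := x)]; tauto
  have e1 := hv b a
  have e2 := hv c b
  have e3 := hv a c
  clear hv
  rcases key x with hx | hx | hx | ⟨x1, x2, x3, x4, x5, x6⟩ <;>
  rcases key y with hy | hy | hy | ⟨y1, y2, y3, y4, y5, y6⟩ <;>
  clear key <;>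
  simp only [tm, dl, swap_apply_def, *, if_true, if_false, toMat_diag] <;>
  ring

/-- The map `w ↦ (w i - w j)`. -/
def diffMap (k : ℕ) (K : Type*) [Field K] : (Fin k → K) →ₗ[K] (OP k → K) where
  toFun w := fun q => w q.1.1 - w q.1.2
  map_add' v w := by funext q; simp only [Pi.add_apply]; ring
  map_smul' c w := by
    funext q; simp only [Pi.smul_apply, smul_eq_mul, RingHom.id_apply]; ring

lemma toMat_diff (w : Fin k → K) (i j : Fin k) : toMat (diffMap k K w) i j = w i - w j :=
  toMat_ofMat (fun i j => w i - w j) (fun _ => sub_self _) i j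

lemma rep_diff (g : Equiv.Perm (Fin k)) (w : Fin k → K) :
    diffMap k K (permRep K (Equiv.Perm (Fin k)) (Fin k) g w) =
      permRep K (Equiv.Perm (Fin k)) (OP k) g (diffMap k K w) := by
  refine toMat_ext fun i j => ?_
  rw [toMat_rep, toMat_diff, toMat_diff]
  rfl

/-- The socle. -/
noncomputable def tSub (k : ℕ) (K : Type*) [Field K] : Submodule K (OP k → K) :=
  (zeroSum k K).map (diffMap k K)

lemma mem_zeroSum (w : Fin k → K) : w ∈ zeroSum k K ↔ ∑ i, w i = 0 := by
  simp [zeroSum, sumFunctional]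

lemma tSub_inv : InvSub (permRep K (Equiv.Perm (Fin k)) (OP k)) (tSub k K) := by
  rintro g _ ⟨w, hw, rfl⟩
  exact ⟨_, zeroSum_inv k K g w hw, rep_diff g w⟩

lemma tSub_le (hk : (k : K) = 0) : tSub k K ≤ spechtHook k K := by
  rintro _ ⟨w, hw, rfl⟩
  rw [SetLike.mem_coe, mem_zeroSum] at hw
  rw [mem_specht]
  simp only [toMat_diff]
  refine ⟨fun i j => by ring, fun i => ?_⟩
  simp [Finset.sum_sub_distrib, hw, hk]

lemma mem_tSub_of (hk : (k : K) = 0) (h0 : 0 < k) (v : OP k → K) (hv : v ∈ spechtHook k K)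
    (h : ∀ a b c, toMat v a b + toMat v b c + toMat v c a = 0) : v ∈ tSub k K := by
  rw [mem_specht] at hv
  obtain ⟨ha, hr⟩ := hv
  refine ⟨fun i => toMat v i ⟨0, h0⟩, ?_, ?_⟩
  · rw [SetLike.mem_coe, mem_zeroSum]
    have : ∀ i, toMat v i ⟨0, h0⟩ = - toMat v ⟨0, h0⟩ i := fun i => ha _ _
    simp only [this, Finset.sum_neg_distrib, hr, neg_zero]
  · refine toMat_ext fun i j => ?_
    rw [toMat_diff]
    linear_combination (-1 : K) * h i j ⟨0, h0⟩ + ha ⟨0, h0⟩ i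

lemma diff_eq_zero (w : Fin k → K) : diffMap k K w = 0 ↔ ∀ i j, w i = w j := by
  constructor
  · intro h i j
    have := toMat_diff w i j
    rw [h] at this
    have h0 : toMat (0 : OP k → K) i j = 0 := by
      by_cases h : i = j <;> simp [toMat, h]; rfl
    rw [h0] at this
    exact (sub_eq_zero.mp this.symm)
  · intro h
    funext q
    exact sub_eq_zero.mpr (h _ _)

lemma tSub_le_of (h0 : 0 < k) (U : Submodule K (OP k → K))
    (hU : InvSub (permRep K (Equiv.Perm (Fin k)) (OP k)) U)
    (w : Fin k → K) (hw : diffMap k K w ∈ U) (hne : diffMap k K w ≠ 0) : tSub k K ≤ U := by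
  classical
  have : ∃ a b, w a ≠ w b := by
    by_contra! hcon
    exact hne ((diff_eq_zero w).mpr hcon)
  obtain ⟨a, b, hab⟩ := this
  have hab' : a ≠ b := fun e => hab (by rw [e])
  have h1 : diffMap k K (dl a - dl b) ∈ U := by
    have h2 := U.sub_mem hw (hU (swap a b) _ hw)
    rw [← rep_diff, ← map_sub] at h2
    have h3 : w - permRep K (Equiv.Perm (Fin k)) (Fin k) (swap a b) w =
        (w a - w b) • (dl a - dl b : Fin k → K) := by
      funext i
      have : permRep K (Equiv.Perm (Fin k)) (Fin k) (swap a b) w i = w (swap a b i) := by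
        rw [← swap_inv a b]; simp [permRep, LinearMap.funLeft]
      simp only [Pi.sub_apply, Pi.smul_apply, this, smul_eq_mul, dl]
      by_cases hi : a = i
      · subst hi; simp [hab'.symm]
      by_cases hi' : b = i
      · subst hi'; simp [hab']
      rw [swap_apply_of_ne_of_ne (Ne.symm hi) (Ne.symm hi')]
      simp [hi, hi']
    rw [h3, map_smul] at h2
    exact (U.smul_mem_iff (sub_ne_zero.mpr hab)).mp h2
  have h2 : ∀ x y, diffMap k K (dl x - dl y) ∈ U := by
    intro x y
    by_cases hxy : x = y
    · subst hxy; simp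
    have rep : ∀ (g : Equiv.Perm (Fin k)) (a b : Fin k),
        permRep K (Equiv.Perm (Fin k)) (Fin k) g (dl a - dl b : Fin k → K) =
          dl (g a) - dl (g b) := by
      intro g a b
      funext i
      exact congrArg₂ (fun x y : K => x - y) (dl_perm g a i) (dl_perm g b i)
    have s1 := hU (swap a x) _ h1
    rw [← rep_diff, rep, swap_apply_left] at s1
    have hb1 : swap a x b ≠ x := fun e => hab' (by
      have := congrArg (swap a x) e; simpa using this.symm)
    have s2 := hU (swap (swap a x b) y) _ s1
    rwa [← rep_diff, rep, swap_apply_left, swap_apply_of_ne_of_ne hb1.symm hxy] at s2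
  rintro _ ⟨w, hw, rfl⟩
  rw [SetLike.mem_coe, mem_zeroSum] at hw
  have : w = ∑ i, w i • (dl i - dl ⟨0, h0⟩ : Fin k → K) := by
    funext x
    simp only [Finset.sum_apply, Pi.smul_apply, Pi.sub_apply, smul_eq_mul, mul_sub,
      Finset.sum_sub_distrib, sum_dl_mul, ← Finset.sum_mul, hw]
    ring
  rw [this, map_sum]
  exact U.sum_mem fun i _ => by rw [map_smul]; exact U.smul_mem _ (h2 _ _)

/-- The invariant submodules of the Specht module. -/
lemma lattice (h2 : (2 : K) ≠ 0) (hk : (k : K) = 0) (h0 : 0 < k) (U : Submodule K (OP k → K))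
    (hU : InvSub (permRep K (Equiv.Perm (Fin k)) (OP k)) U) (hS : U ≤ spechtHook k K) :
    U = ⊥ ∨ U = tSub k K ∨ U = spechtHook k K := by
  by_cases hT : U ≤ tSub k K
  · by_cases hb : U = ⊥
    · exact Or.inl hb
    · right; left
      obtain ⟨v, hv, hne⟩ := Submodule.exists_mem_ne_zero_of_ne_bot hb
      obtain ⟨w, hw, rfl⟩ := hT hv
      exact le_antisymm hT (tSub_le_of h0 U hU w hv hne)
  · right; right
    obtain ⟨v, hv, hnT⟩ := SetLike.not_le_iff_exists.mp hT
    have : ∃ a b c, toMat v a b + toMat v b c + toMat v c a ≠ 0 := by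
      by_contra! hcon
      exact hnT (mem_tSub_of hk h0 v (hS hv) hcon)
    obtain ⟨a, b, c, habc⟩ := this
    have ha := ((mem_specht v).mp (hS hv)).1
    have hab : a ≠ b := by
      rintro rfl; exact habc (by rw [toMat_diag, ha a c]; ring)
    have hbc : b ≠ c := by
      rintro rfl; exact habc (by rw [toMat_diag, ha a b]; ring)
    have hac : a ≠ c := by
      rintro rfl; exact habc (by rw [toMat_diag, ha a b]; ring)
    have hmem : (2 * (toMat v a b + toMat v b c + toMat v c a)) • tv K a b c ∈ U := by
      rw [← kappa v ha hab hbc hac]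
      exact U.add_mem (U.add_mem (U.sub_mem (U.sub_mem (U.sub_mem hv (hU _ _ hv)) (hU _ _ hv))
        (hU _ _ hv)) (hU _ _ hv)) (hU _ _ hv)
    have ht := (U.smul_mem_iff (mul_ne_zero h2 habc)).mp hmem
    exact le_antisymm hS (specht_le_of_tv h2 h0 U (tv_all U hU hab hbc hac ht))

lemma sum_mul_toMat (v w : OP k → K) :
    ∑ q, v q * w q = ∑ i, ∑ j, toMat v i j * toMat w i j := by
  rw [sum_op]
  refine Finset.sum_congr rfl fun i _ => Finset.sum_congr rfl fun j _ => ?_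
  by_cases h : i = j <;> simp [toMat, h]

lemma mem_perp (U : Submodule K (OP k → K)) (v : OP k → K) :
    v ∈ perpSub K U ↔ ∀ w ∈ U, ∑ i, ∑ j, toMat w i j * toMat v i j = 0 := by
  simp only [perpSub, Submodule.mem_iInf, LinearMap.mem_ker, formMap, LinearMap.sum_apply,
    LinearMap.smul_apply, LinearMap.proj_apply, smul_eq_mul, sum_mul_toMat, Subtype.forall]

lemma perp_eq (h2 : (2 : K) ≠ 0) (hk : (k : K) = 0) (h0 : 0 < k) :
    spechtHook k K ⊓ perpSub K (spechtHook k K) = tSub k K := by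
  apply le_antisymm
  · rintro v ⟨hv, hp⟩
    refine mem_tSub_of hk h0 v hv fun a b c => ?_
    have := (mem_perp _ _).mp hp _ (tv_mem a b c)
    have ha := ((mem_specht v).mp hv).1
    have key : ∀ i j, tm a b c i j * toMat v i j =
        (toMat v i j * dl b j) * dl a i - (toMat v i j * dl c j) * dl a i
          + (toMat v i j * dl c j) * dl b i - (toMat v i j * dl a j) * dl b i
          + (toMat v i j * dl a j) * dl c i - (toMat v i j * dl b j) * dl c i := by
      intro i j; simp only [tm]; ring
    simp only [toMat_tv, key, Finset.sum_add_distrib, Finset.sum_sub_distrib,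
      ← Finset.sum_mul, sum_dl_mul_right] at this
    rw [ha a c, ha b a, ha c b] at this
    have h3 : 2 * (toMat v a b + toMat v b c + toMat v c a) = 0 := by
      linear_combination this
    exact (mul_eq_zero.mp h3).resolve_left h2
  · refine le_inf (tSub_le hk) ?_
    rintro _ ⟨w, hw, rfl⟩
    rw [mem_perp]
    intro v hv
    obtain ⟨ha, hr⟩ := (mem_specht v).mp hv
    have hc : ∀ j, ∑ i, toMat v i j = 0 := fun j => by
      have : ∀ i, toMat v i j = - toMat v j i := fun i => ha i j
      simp only [this, Finset.sum_neg_distrib, hr, neg_zero]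
    simp only [toMat_diff, mul_sub, Finset.sum_sub_distrib, ← Finset.sum_mul, hr]
    rw [Finset.sum_comm]
    simp only [← Finset.sum_mul, hc]
    simp

lemma finrank_zeroSum (h0 : 0 < k) : Module.finrank K (zeroSum k K) = k - 1 := by
  have hs : LinearMap.range (sumFunctional k K) = ⊤ := by
    rw [LinearMap.range_eq_top]
    intro c
    refine ⟨c • dl ⟨0, h0⟩, ?_⟩
    simp [sumFunctional, sum_dl]
  have := LinearMap.finrank_range_add_finrank_ker (sumFunctional k K)
  rw [hs] at this
  simp at this
  rw [zeroSum]
  omega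

lemma finrank_specht (m : ℕ) :
    Module.finrank K (spechtHook (m + 1) K) = m * (m - 1) / 2 := by
  let I := {q : Fin m × Fin m // q.1 < q.2}
  let e : I → OP (m + 1) := fun q =>
    ⟨(q.1.1.succ, q.1.2.succ), fun h => q.2.ne (Fin.succ_injective _ h)⟩
  let r : spechtHook (m + 1) K →ₗ[K] (I → K) :=
    (LinearMap.funLeft K K e).comp (spechtHook (m + 1) K).subtype
  have hr : ∀ (v : spechtHook (m + 1) K) (q : I), r v q =
      toMat (v : OP (m + 1) → K) q.1.1.succ q.1.2.succ := fun v q =>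
    (toMat_op v.1 (e q)).symm
  have inj : Function.Injective r := by
    rw [← LinearMap.ker_eq_bot, LinearMap.ker_eq_bot']
    intro v hv
    obtain ⟨ha, hs⟩ := (mem_specht _).mp v.2
    have h1 : ∀ i j : Fin m, i < j → toMat (v : OP (m + 1) → K) i.succ j.succ = 0 := by
      intro i j hij
      rw [← hr v ⟨(i, j), hij⟩, hv]; rfl
    have h2 : ∀ i j : Fin m, toMat (v : OP (m + 1) → K) i.succ j.succ = 0 := by
      intro i j
      rcases lt_trichotomy i j with h | h | h
      · exact h1 i j h
      · rw [h, toMat_diag]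
      · rw [ha, h1 j i h, neg_zero]
    have h3 : ∀ i : Fin m, toMat (v : OP (m + 1) → K) i.succ 0 = 0 := by
      intro i
      have := hs i.succ
      rw [Fin.sum_univ_succ] at this
      simpa [h2] using this
    apply Subtype.ext
    refine toMat_ext fun i j => ?_
    have hz : toMat ((0 : spechtHook (m + 1) K) : OP (m + 1) → K) i j = 0 := by
      by_cases h : i = j <;> simp [toMat, h]; rfl
    rw [hz]
    refine Fin.cases ?_ (fun i => ?_) i <;> refine Fin.cases ?_ (fun j => ?_) j
    · exact toMat_diag _ _
    · rw [ha, h3, neg_zero]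
    · exact h3 i
    · exact h2 i j
  have surj : Function.Surjective r := by
    intro B
    refine ⟨∑ q : I, B q • ⟨tv K 0 q.1.1.succ q.1.2.succ, tv_mem _ _ _⟩, ?_⟩
    rw [map_sum]
    funext x
    rw [Finset.sum_apply, Finset.sum_eq_single x]
    · rw [map_smul, Pi.smul_apply, hr]
      simp only [toMat_tv, tm, dl]
      have := x.2.ne
      simp [this, this.symm, (Fin.succ_ne_zero _).symm]
    · intro y _ hy
      rw [map_smul, Pi.smul_apply, hr]
      obtain ⟨⟨a, b⟩, hab⟩ := x
      obtain ⟨⟨c, d⟩, hcd⟩ := y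
      simp only [toMat_tv, tm, dl]
      have h1 : ¬ (c = a ∧ d = b) := by
        rintro ⟨rfl, rfl⟩; exact hy rfl
      have h2 : ¬ (c = b ∧ d = a) := by
        rintro ⟨rfl, rfl⟩; exact absurd hab (not_lt.mpr hcd.le)
      by_cases e1 : c = a <;> by_cases e2 : d = b <;> by_cases e3 : c = b <;>
        by_cases e4 : d = a <;> simp_all [(Fin.succ_ne_zero _).symm]
    · simp
  rw [(LinearEquiv.ofBijective r ⟨inj, surj⟩).finrank_eq, Module.finrank_fintype_fun_eq_card]
  have : Fintype.card I = ∑ j : Fin m, (j : ℕ) := by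
    rw [Fintype.card_subtype, Finset.card_filter, Fintype.sum_prod_type_right]
    refine Finset.sum_congr rfl fun j _ => ?_
    rw [← Finset.card_filter, show (Finset.univ.filter fun x : Fin m => x < j) = Finset.Iio j by
      ext; simp, Fin.card_Iio]
  rw [this, Fin.sum_univ_eq_sum_range (fun i => i), Finset.sum_range_id]

lemma ker_diff (h0 : 0 < k) : LinearMap.ker (diffMap k K) = constLine k K := by
  ext w
  rw [LinearMap.mem_ker, diff_eq_zero, constLine, Submodule.mem_span_singleton]
  constructor
  · intro h
    refine ⟨w ⟨0, h0⟩, ?_⟩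
    funext i
    simp [h i ⟨0, h0⟩]
  · rintro ⟨c, rfl⟩ i j
    rfl

lemma const_le (hk : (k : K) = 0) : constLine k K ≤ zeroSum k K := by
  rw [constLine, Submodule.span_singleton_le_iff_mem, mem_zeroSum]
  simp [hk]

lemma finrank_const (h0 : 0 < k) : Module.finrank K (constLine k K) = 1 := by
  refine finrank_span_singleton fun h => ?_
  have := congrFun h ⟨0, h0⟩
  simp at this

lemma finrank_tSub (hk : (k : K) = 0) (h0 : 0 < k) : Module.finrank K (tSub k K) = k - 2 := by
  have h := LinearMap.finrank_range_add_finrank_ker ((diffMap k K).domRestrict (zeroSum k K))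
  rw [finrank_zeroSum h0, LinearMap.range_domRestrict, LinearMap.ker_domRestrict,
    ker_diff h0] at h
  have h1 := (Submodule.comapSubtypeEquivOfLe (const_le (k := k) (K := K) hk)).finrank_eq
  rw [finrank_const h0] at h1
  rw [tSub]
  have h2 : Module.finrank K ((constLine k K).submoduleOf (zeroSum k K)) = 1 := h1
  omega

end Aux

/-- **(Guralnick–Liebeck, Lemma 3.1; cf. Peel.)** Let `p` be an odd prime dividing `k`,
`k ≥ 10`, and `F = 𝔽_p`. The Specht module `S = S^(k-2,1,1)` for `S_k` over `F` has
dimension `(k-1)(k-2)/2`; it is indecomposable, its socle is isomorphic (as an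
`S_k`-module) to the irreducible module `L = D^(k-1,1)` of dimension `k-2`, and its head
is isomorphic to the irreducible module `D = D^(k-2,1,1)` of dimension `(k-2)(k-3)/2`. -/
theorem spechtHook_structure
    (k p : ℕ) (hk : 10 ≤ k) (hp : p.Prime) [Fact p.Prime] (hodd : Odd p) (hdvd : p ∣ k) :
    -- dimensions
    Module.finrank (ZMod p) (spechtHook k (ZMod p)) = (k - 1) * (k - 2) / 2 ∧
    Module.finrank (ZMod p) (Dk11 k p) = k - 2 ∧
    Module.finrank (ZMod p) (Dk211 k p) = (k - 2) * (k - 3) / 2 ∧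
    -- `S` is indecomposable
    IsIndecomposableSub (permRep (ZMod p) (Equiv.Perm (Fin k)) (OP k))
      (spechtHook k (ZMod p)) ∧
    -- the socle of `S` is isomorphic to `L = D^(k-1,1)`:
    -- an injective equivariant map `L → M^(k-2,1,1)` with image the socle of `S`
    (∃ ψ : Dk11 k p →ₗ[ZMod p] (OP k → ZMod p),
      Function.Injective ψ ∧
      LinearMap.range ψ =
        socIn (permRep (ZMod p) (Equiv.Perm (Fin k)) (OP k)) (spechtHook k (ZMod p)) ∧
      ∀ (g : Equiv.Perm (Fin k)) (x : Dk11 k p),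
        ψ (Dk11Rep k p g x) = permRep (ZMod p) (Equiv.Perm (Fin k)) (OP k) g (ψ x)) ∧
    -- the head of `S` is isomorphic to `D = D^(k-2,1,1)`:
    -- an equivariant map defined on `S`, surjective from `S`, with kernel the radical
    (∃ φ : (OP k → ZMod p) →ₗ[ZMod p] Dk211 k p,
      (spechtHook k (ZMod p)).map φ = ⊤ ∧
      LinearMap.ker φ ⊓ spechtHook k (ZMod p) =
        radIn (permRep (ZMod p) (Equiv.Perm (Fin k)) (OP k)) (spechtHook k (ZMod p)) ∧
      ∀ (g : Equiv.Perm (Fin k)) (v : OP k → ZMod p), v ∈ spechtHook k (ZMod p) →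
        φ (permRep (ZMod p) (Equiv.Perm (Fin k)) (OP k) g v) = Dk211Rep k p g (φ v)) := by
  have h0 : 0 < k := by omega
  have hk0 : ((k : ℕ) : ZMod p) = 0 := (ZMod.natCast_eq_zero_iff k p).mpr hdvd
  have h2 : (2 : ZMod p) ≠ 0 := by
    intro h
    have h' : ((2 : ℕ) : ZMod p) = 0 := by exact_mod_cast h
    rw [ZMod.natCast_eq_zero_iff] at h'
    have := (Nat.prime_dvd_prime_iff_eq hp Nat.prime_two).mp h'
    subst this
    exact absurd hodd (by decide)
  have dS : Module.finrank (ZMod p) (spechtHook k (ZMod p)) = (k - 1) * (k - 2) / 2 := by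
    obtain ⟨m, rfl⟩ : ∃ m, k = m + 1 := ⟨k - 1, by omega⟩
    exact finrank_specht m
  have dT := finrank_tSub (K := ZMod p) hk0 h0
  have hTS : tSub k (ZMod p) ≤ spechtHook k (ZMod p) := tSub_le hk0
  have hperp := perp_eq h2 hk0 h0
  have hlat := lattice h2 hk0 h0
  have hSinv := spechtHook_inv k (ZMod p)
  have hTinv := tSub_inv (k := k) (K := ZMod p)
  have arith : (k - 2) * (k - 3) / 2 + (k - 2) = (k - 1) * (k - 2) / 2 := by
    obtain ⟨m, rfl⟩ : ∃ m, k = m + 3 := ⟨k - 3, by omega⟩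
    simp only [show m + 3 - 2 = m + 1 by omega, show m + 3 - 3 = m by omega,
      show m + 3 - 1 = m + 2 by omega]
    rw [← Nat.add_mul_div_right _ _ (by norm_num : 0 < 2)]
    congr 1; ring
  have apos : 0 < (k - 2) * (k - 3) / 2 := by
    have : 2 * 1 ≤ (k - 2) * (k - 3) := Nat.mul_le_mul (by omega) (by omega)
    omega
  have hTne : tSub k (ZMod p) ≠ ⊥ := by
    intro h
    rw [h, finrank_bot] at dT
    omega
  have hTneS : tSub k (ZMod p) ≠ spechtHook k (ZMod p) := by
    intro h
    rw [h] at dT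
    omega
  have hmin : ∀ U, InvSub (permRep (ZMod p) (Equiv.Perm (Fin k)) (OP k)) U →
      U ≤ spechtHook k (ZMod p) → U ≠ ⊥ → tSub k (ZMod p) ≤ U := by
    intro U hU hUS hb
    rcases hlat U hU hUS with h | h | h
    · exact absurd h hb
    · exact h.ge
    · rw [h]; exact hTS
  have d11 : Module.finrank (ZMod p) (Dk11 k p) = k - 2 := by
    have h := Submodule.finrank_quotient_add_finrank
      ((constLine k (ZMod p)).comap (zeroSum k (ZMod p)).subtype)
    have h1 := (Submodule.comapSubtypeEquivOfLe
      (const_le (k := k) (K := ZMod p) hk0)).finrank_eq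
    rw [finrank_const h0] at h1
    rw [finrank_zeroSum h0] at h
    change Module.finrank (ZMod p) (Dk11 k p) + _ = _ at h
    omega
  have d211 : Module.finrank (ZMod p) (Dk211 k p) = (k - 2) * (k - 3) / 2 := by
    have h := Submodule.finrank_quotient_add_finrank
      ((spechtHook k (ZMod p) ⊓ perpSub (ZMod p) (spechtHook k (ZMod p))).comap
        (spechtHook k (ZMod p)).subtype)
    change Module.finrank (ZMod p) (Dk211 k p) + _ = _ at h
    have h1 := (Submodule.comapSubtypeEquivOfLe
      (hperp.le.trans hTS)).finrank_eq
    have h3 : Module.finrank (ZMod p)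
      ↥(spechtHook k (ZMod p) ⊓ perpSub (ZMod p) (spechtHook k (ZMod p))) = k - 2 := by
      rw [hperp]; exact dT
    omega
  refine ⟨dS, d11, d211, ?_, ?_, ?_⟩
  · rintro ⟨U, W, hU, hW, hU0, hW0, hinf, hsup⟩
    have h1 := hmin U hU (hsup ▸ le_sup_left) hU0
    have h3 := hmin W hW (hsup ▸ le_sup_right) hW0
    exact hTne (le_bot_iff.mp (hinf ▸ le_inf h1 h3))
  · have hsoc : socIn (permRep (ZMod p) (Equiv.Perm (Fin k)) (OP k)) (spechtHook k (ZMod p)) =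
        tSub k (ZMod p) := by
      apply le_antisymm
      · refine sSup_le ?_
        rintro U ⟨hUS, hUi, hU0, hUm⟩
        rcases hUm _ (hmin U hUi hUS hU0) hTinv with h | h
        · exact absurd h hTne
        · exact h.ge
      · refine le_sSup ⟨hTS, hTinv, hTne, fun W hW hWi => ?_⟩
        by_cases hb : W = ⊥
        · exact Or.inl hb
        · exact Or.inr (le_antisymm hW (hmin W hWi (hW.trans hTS) hb))
    let Q := (constLine k (ZMod p)).comap (zeroSum k (ZMod p)).subtype
    let f := (diffMap k (ZMod p)).comp (zeroSum k (ZMod p)).subtype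
    have hker : LinearMap.ker f = Q := by
      rw [LinearMap.ker_comp, ker_diff h0]
    let ψ : (zeroSum k (ZMod p) ⧸ Q) →ₗ[ZMod p] (OP k → ZMod p) := Q.liftQ f hker.ge
    refine ⟨ψ, ?_, ?_, ?_⟩
    · exact LinearMap.ker_eq_bot.mp (Submodule.ker_liftQ_eq_bot Q f hker.ge hker.le)
    · rw [hsoc]
      refine (Submodule.range_liftQ _ _ _).trans ?_
      rw [LinearMap.range_comp, Submodule.range_subtype]
      rfl
    · intro g x
      obtain ⟨w, rfl⟩ := Submodule.Quotient.mk_surjective Q x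
      exact rep_diff g w.1
  · have hrad : radIn (permRep (ZMod p) (Equiv.Perm (Fin k)) (OP k)) (spechtHook k (ZMod p)) =
        tSub k (ZMod p) := by
      apply le_antisymm
      · refine sInf_le ⟨hTS, hTinv, hTneS, fun W hTW hWS hWi => ?_⟩
        rcases hlat W hWi hWS with h | h | h
        · rw [h] at hTW; exact absurd (le_bot_iff.mp hTW) hTne
        · exact Or.inl h
        · exact Or.inr h
      · refine le_sInf ?_
        rintro U ⟨hUS, hUi, hUne, hUm⟩
        rcases hlat U hUi hUS with h | h | h
        · subst h
          rcases hUm _ bot_le hTS hTinv with h | h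
          · exact absurd h hTne
          · exact absurd h hTneS
        · exact h.ge
        · exact absurd h hUne
    let Q := (spechtHook k (ZMod p) ⊓ perpSub (ZMod p) (spechtHook k (ZMod p))).comap
        (spechtHook k (ZMod p)).subtype
    obtain ⟨φ, hφ⟩ := LinearMap.exists_extend Q.mkQ
    have hφ' : ∀ v (hv : v ∈ spechtHook k (ZMod p)),
        φ v = Submodule.Quotient.mk (p := Q) ⟨v, hv⟩ := fun v hv =>
      LinearMap.congr_fun hφ ⟨v, hv⟩
    refine ⟨φ, ?_, ?_, ?_⟩
    · rw [eq_top_iff]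
      rintro x -
      obtain ⟨w, rfl⟩ := Submodule.Quotient.mk_surjective Q x
      exact ⟨w.1, w.2, hφ' w.1 w.2⟩
    · rw [hrad, ← hperp]
      ext v
      constructor
      · rintro ⟨h1, hv⟩
        have h3 : φ v = 0 := h1
        rw [hφ' v hv] at h3
        exact (Submodule.Quotient.mk_eq_zero Q).mp h3
      · intro hv
        refine ⟨?_, hv.1⟩
        have : φ v = 0 := by
          rw [hφ' v hv.1]
          exact (Submodule.Quotient.mk_eq_zero Q).mpr hv
        exact this
    · intro g v hv
      exact (hφ' _ (hSinv g v hv)).trans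
        (congrArg (fun x => Dk211Rep k p g x) (hφ' v hv)).symm
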